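/- (Christ–Kiselev Lemma, Lemma 3.1.) Let X and Y be Banach spaces, let −∞ ≤ a < b ≤ ∞, and let K(t,s) be a continuous function on [a,b]×[a,b] taking values in B(X,Y), the space of bounded linear maps from X to Y. For Bochner-integrable f : [a,b] → X define Tf(t) = ∫_a^b K(t,s) f(s) ds and Wf(t) = ∫_t^b K(t,s) f(s) ds. Suppose there is a constant C such that ‖Tf‖_{L^q([a,b];Y)} ≤ C ‖f‖_{L^p([a,b];X)} for every such f. Then, provided 1 ≤ p < q ≤ ∞, one has ‖Wf‖_{L^q([a,b];Y)} ≤ (2^{−2(1/p−1/q)} · 2C)/(1 − 2^{−(1/p−1/q)}) · ‖f‖_{L^p([a,b];X)} for every such f. -/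

import Mathlib

open MeasureTheory
open scoped ENNReal

namespace CK
open Set Filter Topology

/-- Fatou for `L^q` norms, allowing the limit to be replaced by zero. -/
lemma fatou {Y : Type*} [NormedAddCommGroup Y] {μ : Measure ℝ} {q B : ℝ≥0∞} (hq : q ≠ 0)
    (F : ℕ → ℝ → Y) (G : ℝ → Y) (hF : ∀ n, AEStronglyMeasurable (F n) μ)
    (hlim : ∀ᵐ t ∂μ, G t = 0 ∨ Tendsto (fun n => F n t) atTop (𝓝 (G t)))
    (hB : ∀ n, eLpNorm (F n) q μ ≤ B) : eLpNorm G q μ ≤ B := by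
  by_cases hqt : q = ∞
  · subst hqt
    simp only [eLpNorm_exponent_top] at *
    apply eLpNormEssSup_le_of_ae_enorm_bound
    have h : ∀ᵐ t ∂μ, ∀ n, ‖F n t‖ₑ ≤ B := by
      rw [ae_all_iff]
      intro n
      filter_upwards [ae_le_eLpNormEssSup (f := F n) (μ := μ)] with t ht using ht.trans (hB n)
    filter_upwards [h, hlim] with t h1 h2
    rcases h2 with h2 | h2
    · simp [h2]
    · exact le_of_tendsto' h2.enorm h1
  · have hq0 : 0 < q.toReal := ENNReal.toReal_pos hq hqt
    simp only [eLpNorm_eq_lintegral_rpow_enorm_toReal hq hqt] at *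
    have hB' : ∀ n, ∫⁻ t, ‖F n t‖ₑ ^ q.toReal ∂μ ≤ B ^ q.toReal := by
      intro n
      have := hB n
      rwa [one_div, ENNReal.rpow_inv_le_iff hq0] at this
    rw [one_div, ENNReal.rpow_inv_le_iff hq0]
    calc ∫⁻ t, ‖G t‖ₑ ^ q.toReal ∂μ
        ≤ ∫⁻ t, liminf (fun n => ‖F n t‖ₑ ^ q.toReal) atTop ∂μ := by
          apply lintegral_mono_ae
          filter_upwards [hlim] with t h2
          rcases h2 with h2 | h2
          · simp [h2, hq0]
          · have : Tendsto (fun n => ‖F n t‖ₑ ^ q.toReal) atTop (𝓝 (‖G t‖ₑ ^ q.toReal)) :=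
              ((ENNReal.continuous_rpow_const).tendsto _).comp h2.enorm
            exact this.liminf_eq.ge
      _ ≤ liminf (fun n => ∫⁻ t, ‖F n t‖ₑ ^ q.toReal ∂μ) atTop :=
          lintegral_liminf_le' fun n => (hF n).enorm.pow_const _
      _ ≤ B ^ q.toReal := by
          refine liminf_le_of_le (by isBoundedDefault) ?_
          intro b hb
          obtain ⟨n, hn⟩ := hb.exists
          exact hn.trans (hB' n)

/-- Mass of sets on which the distribution function oscillates little. -/
lemma mass_le (ν : Measure ℝ) [IsFiniteMeasure ν] [NullSingletonClass ν] (L : Set ℝ) (hL : MeasurableSet L)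
    (η : ℝ) (h : ∀ u ∈ L, ∀ v ∈ L, u ≤ v → ν.real (Iic v) ≤ ν.real (Iic u) + η) :
    ν L ≤ ENNReal.ofReal η := by
  rw [hL.measure_eq_iSup_isCompact ν]
  refine iSup_le fun K => iSup_le fun hKL => iSup_le fun hK => ?_
  rcases K.eq_empty_or_nonempty with rfl | hne
  · simp
  obtain ⟨u, hu⟩ := hK.exists_isLeast hne
  obtain ⟨v, hv⟩ := hK.exists_isGreatest hne
  have huv : u ≤ v := hu.2 hv.1
  have h1 : K ⊆ Icc u v := fun x hx => ⟨hu.2 hx, hv.2 hx⟩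
  calc ν K ≤ ν (Icc u v) := measure_mono h1
    _ = ν (Ioc u v) := (measure_congr Ioc_ae_eq_Icc).symm
    _ = ENNReal.ofReal (ν.real (Ioc u v)) := by simp
    _ ≤ ENNReal.ofReal η := by
      apply ENNReal.ofReal_le_ofReal
      have h2 : ν.real (Iic v) = ν.real (Iic u) + ν.real (Ioc u v) := by
        rw [← measureReal_union _ measurableSet_Ioc, Iic_union_Ioc_eq_Iic huv]
        exact Set.disjoint_left.2 fun x hx hx' => absurd hx'.1 (not_lt.2 hx)
      have := h u (hKL hu.1) v (hKL hv.1) huv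
      linarith

/-- Dyadic level of `G`. -/
noncomputable def lev (G : ℝ → ℝ) (j : ℕ) (s : ℝ) : ℕ := ⌊2 ^ j * G s⌋₊

lemma lev_succ (G : ℝ → ℝ) (j : ℕ) (s : ℝ) : lev G j s = lev G (j+1) s / 2 := by
  unfold lev
  rw [← Nat.floor_div_natCast]
  congr 1
  push_cast
  ring

lemma lev_mono {G : ℝ → ℝ} (hG : Monotone G) (j : ℕ) : Monotone (lev G j) := by
  intro s t hst
  apply Nat.floor_mono
  have := hG hst
  gcongr

lemma lev_meas {G : ℝ → ℝ} (hG : Monotone G) (j : ℕ) : Measurable (lev G j) :=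
  (lev_mono hG j).measurable

lemma lev_le {G : ℝ → ℝ} (h1 : ∀ s, G s ≤ 1) (j : ℕ) (s : ℝ) : lev G j s ≤ 2 ^ j := by
  unfold lev
  apply Nat.floor_le_of_le
  push_cast
  have := h1 s
  have h2 : (0:ℝ) < 2 ^ j := by positivity
  nlinarith

lemma lev_diff {G : ℝ → ℝ} (h0 : ∀ s, 0 ≤ G s) (j : ℕ) {s t : ℝ} (h : lev G j s = lev G j t) :
    G s ≤ G t + (1/2) ^ j := by
  have h2 : (0:ℝ) < 2 ^ j := by positivity
  have h3 := Nat.lt_floor_add_one (2 ^ j * G s)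
  have h4 := Nat.floor_le (mul_nonneg h2.le (h0 t))
  unfold lev at h
  rw [h] at h3
  have h5 : 2 ^ j * G s ≤ 2 ^ j * (G t + (1/2) ^ j) := by
    rw [mul_add, ← mul_pow]; norm_num; linarith
  exact le_of_mul_le_mul_left h5 h2

/-- same cell, to the right of `t` -/
def E (G : ℝ → ℝ) (j : ℕ) (t : ℝ) : Set ℝ := {s | t < s ∧ lev G j s = lev G j t}
/-- the right sibling cell -/
def P (G : ℝ → ℝ) (j : ℕ) (t : ℝ) : Set ℝ := {s | Even (lev G j t) ∧ lev G j s = lev G j t + 1}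

lemma E_eq {G : ℝ → ℝ} (hG : Monotone G) (j : ℕ) (t : ℝ) :
    E G j t = E G (j+1) t ∪ P G (j+1) t := by
  ext s
  have ht := lev_succ G j t
  have hs := lev_succ G j s
  simp only [E, P, mem_union, mem_ofPred_eq, Nat.even_iff]
  constructor
  · rintro ⟨h1, h2⟩
    have := lev_mono hG (j+1) h1.le
    simp only [h1, true_and]
    omega
  · rintro (⟨h1, h2⟩ | ⟨h1, h2⟩)
    · refine ⟨h1, by omega⟩
    · refine ⟨?_, by omega⟩
      by_contra h
      have := lev_mono hG (j+1) (not_lt.1 h)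
      omega

lemma EP_disj (G : ℝ → ℝ) (j : ℕ) (t : ℝ) : Disjoint (E G j t) (P G j t) := by
  rw [Set.disjoint_left]
  rintro s ⟨_, h⟩ ⟨_, h'⟩
  omega

lemma E_meas {G : ℝ → ℝ} (hG : Monotone G) (j : ℕ) (t : ℝ) : MeasurableSet (E G j t) :=
  measurableSet_Ioi.inter (lev_meas hG j (measurableSet_singleton _))

lemma P_meas {G : ℝ → ℝ} (hG : Monotone G) (j : ℕ) (t : ℝ) : MeasurableSet (P G j t) :=
  (MeasurableSet.const _).inter (lev_meas hG j (measurableSet_singleton _))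

lemma sum_P {Y : Type*} [NormedAddCommGroup Y] [NormedSpace ℝ Y] {μ : Measure ℝ} {h : ℝ → Y}
    (hh : Integrable h μ) {G : ℝ → ℝ} (hG : Monotone G) (t : ℝ) (N : ℕ) :
    ∑ j ∈ Finset.range N, ∫ s in P G (j+1) t, h s ∂μ
      = ∫ s in E G 0 t, h s ∂μ - ∫ s in E G N t, h s ∂μ := by
  induction N with
  | zero => simp
  | succ N ih =>
    rw [Finset.sum_range_succ, ih, E_eq hG N t,
      setIntegral_union (EP_disj G (N+1) t) (P_meas hG _ _) hh.integrableOn hh.integrableOn]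
    abel

/-- pointwise convergence of the decomposition -/
lemma tendsto_P {Y : Type*} [NormedAddCommGroup Y] [NormedSpace ℝ Y] {μ : Measure ℝ} {h : ℝ → Y}
    (hh : Integrable h μ) {G : ℝ → ℝ} (hG : Monotone G) (h0 : ∀ s, 0 ≤ G s) (h1 : ∀ s, G s ≤ 1)
    (hz : ∀ c, ∀ᵐ s ∂μ, G s = c → h s = 0) (t : ℝ) :
    Tendsto (fun N => ∑ j ∈ Finset.range N, ∫ s in P G (j+1) t, h s ∂μ) atTop
      (𝓝 (∫ s in Ioi t, h s ∂μ)) := by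
  have e0 : ∫ s in Ioi t, h s ∂μ = ∫ s in E G 0 t, h s ∂μ := by
    rw [← integral_indicator measurableSet_Ioi, ← integral_indicator (E_meas hG _ _)]
    apply integral_congr_ae
    filter_upwards [hz 1] with s hs
    by_cases hts : t < s
    · rw [indicator_of_mem (show s ∈ Ioi t from hts)]
      by_cases hE : s ∈ E G 0 t
      · rw [indicator_of_mem hE]
      · rw [indicator_of_notMem hE]
        apply hs
        have hne : lev G 0 s ≠ lev G 0 t := fun h => hE ⟨hts, h⟩
        have := lev_mono hG 0 hts.le
        have h4 : 1 ≤ lev G 0 s := by omega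
        unfold lev at h4
        rw [Nat.one_le_floor_iff] at h4
        simp at h4
        exact le_antisymm (h1 s) h4
    · rw [indicator_of_notMem (show s ∉ Ioi t from hts), indicator_of_notMem (fun h => hts h.1)]
  have anti : Antitone (fun N => E G N t) := by
    apply antitone_nat_of_succ_le
    intro n
    rw [E_eq hG n t]
    exact subset_union_left
  have lim := tendsto_setIntegral_of_antitone (f := h) (μ := μ) (fun N => E_meas hG N t) anti
    ⟨0, hh.integrableOn⟩
  have z : ∫ s in ⋂ N, E G N t, h s ∂μ = 0 := by
    apply setIntegral_eq_zero_of_ae_eq_zero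
    filter_upwards [hz (G t)] with s hs hm
    apply hs
    rw [mem_iInter] at hm
    have l : Tendsto (fun j : ℕ => ((1:ℝ)/2)^j) atTop (𝓝 0) :=
      tendsto_pow_atTop_nhds_zero_of_lt_one (by norm_num) (by norm_num)
    apply le_antisymm
    · have : Tendsto (fun j : ℕ => G t + ((1:ℝ)/2)^j) atTop (𝓝 (G t + 0)) := l.const_add _
      simpa using ge_of_tendsto' this (fun j => lev_diff h0 j (hm j).2)
    · exact hG (hm 0).1.le
  rw [z] at lim
  simp_rw [sum_P hh hG t, e0]
  simpa using lim.const_sub (∫ s in E G 0 t, h s ∂μ)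

section ker
variable {X Y : Type*} [NormedAddCommGroup X] [NormedSpace ℝ X]
    [NormedAddCommGroup Y] [NormedSpace ℝ Y]

lemma ker_meas {S : Set ℝ} (hSm : MeasurableSet S) {K : ℝ → ℝ → (X →L[ℝ] Y)}
    (hK : ContinuousOn (fun z : ℝ × ℝ => K z.1 z.2) (S ×ˢ S)) {f : ℝ → X}
    (hf : AEStronglyMeasurable f (volume.restrict S)) (R : Set (ℝ × ℝ)) (hR : MeasurableSet R) :
    AEStronglyMeasurable (fun t => ∫ s in {s | (t, s) ∈ R}, K t s (f s) ∂(volume.restrict S))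
      (volume.restrict S) := by
  have h1 : AEStronglyMeasurable (fun z : ℝ × ℝ => K z.1 z.2)
      ((volume.restrict S).prod (volume.restrict S)) := by
    rw [Measure.prod_restrict]
    exact hK.aestronglyMeasurable (hSm.prod hSm)
  have h2 : AEStronglyMeasurable (fun z : ℝ × ℝ => K z.1 z.2 (f z.2))
      ((volume.restrict S).prod (volume.restrict S)) :=
    (ContinuousLinearMap.id ℝ (X →L[ℝ] Y)).aestronglyMeasurable_comp₂ h1 hf.comp_snd
  have h3 := (h2.indicator hR).integral_prod_right'
  refine h3.congr (Eventually.of_forall fun t => ?_)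
  simp only
  have hm : MeasurableSet {s | (t, s) ∈ R} := measurable_prodMk_left hR
  rw [← integral_indicator hm]
  rfl

lemma ker_int {S : Set ℝ} (hSm : MeasurableSet S) {K : ℝ → ℝ → (X →L[ℝ] Y)}
    (hK : ContinuousOn (fun z : ℝ × ℝ => K z.1 z.2) (S ×ˢ S)) {f : ℝ → X}
    (hf : Integrable f (volume.restrict S)) {Q : Set ℝ} (hQ : IsCompact Q) (hQS : Q ⊆ S)
    (hfQ : ∀ s ∉ Q, f s = 0) {t : ℝ} (ht : t ∈ S) :
    Integrable (fun s => K t s (f s)) (volume.restrict S) := by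
  have hc : ContinuousOn (fun s => K t s) S :=
    hK.comp (f := fun s => (t, s)) (by fun_prop) (fun s hs => ⟨ht, hs⟩)
  obtain ⟨M, hM⟩ := hQ.exists_bound_of_continuousOn (hc.mono hQS)
  have hm : AEStronglyMeasurable (fun s => K t s (f s)) (volume.restrict S) :=
    (ContinuousLinearMap.id ℝ (X →L[ℝ] Y)).aestronglyMeasurable_comp₂
      (hc.aestronglyMeasurable hSm) hf.1
  refine (hf.norm.const_mul M).mono' hm (Eventually.of_forall fun s => ?_)
  by_cases hs : s ∈ Q
  · exact ((K t s).le_opNorm _).trans (by gcongr; exact hM s hs)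
  · simp [hfQ s hs]


lemma level {S : Set ℝ} (hSm : MeasurableSet S) {K : ℝ → ℝ → (X →L[ℝ] Y)}
    (hK : ContinuousOn (fun z : ℝ × ℝ => K z.1 z.2) (S ×ˢ S)) {f : ℝ → X}
    (hf : Integrable f (volume.restrict S)) {p q C D : ℝ≥0∞} (hq : q ≠ 0)
    (hT : ∀ f : ℝ → X, Integrable f (volume.restrict S) →
      eLpNorm (fun t => ∫ s in S, (K t s) (f s)) q (volume.restrict S) ≤
        C * eLpNorm f p (volume.restrict S))
    {G : ℝ → ℝ} (hG : Monotone G) (h1 : ∀ s, G s ≤ 1) (j : ℕ)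
    (hJ : ∀ n, eLpNorm ({s | lev G j s = n}.indicator f) p (volume.restrict S) ≤ D) :
    eLpNorm (fun t => ∫ s in P G j t, K t s (f s) ∂(volume.restrict S)) q (volume.restrict S)
      ≤ (2:ℝ≥0∞) ^ (j * (1/q).toReal) * (C * D) := by
  have hJm : ∀ n, MeasurableSet {s | lev G j s = n} := fun n =>
    lev_meas hG j (measurableSet_singleton n)
  set Tn : ℕ → ℝ → Y := fun n t => ∫ s in S, K t s ({s | lev G j s = n + 1}.indicator f s) with hTn
  have hTb : ∀ n, eLpNorm (Tn n) q (volume.restrict S) ≤ C * D := fun n =>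
    (hT _ (hf.indicator (hJm _))).trans (by gcongr; exact hJ _)
  have hTm : ∀ n, AEStronglyMeasurable (Tn n) (volume.restrict S) := by
    intro n
    have := ker_meas hSm hK (hf.indicator (hJm (n+1))).1 univ MeasurableSet.univ
    simpa using this
  have hpt : ∀ t, (∫ s in P G j t, K t s (f s) ∂(volume.restrict S)) = 0 ∨
      (lev G j t < 2 ^ j ∧ (∫ s in P G j t, K t s (f s) ∂(volume.restrict S))
        = Tn (lev G j t) t) := by
    intro t
    by_cases hP : P G j t = ∅
    · left; simp [hP]
    · obtain ⟨s, hs⟩ := nonempty_iff_ne_empty.2 hP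
      right
      refine ⟨?_, ?_⟩
      · have := lev_le h1 j s
        have := hs.2
        omega
      · rw [hTn, ← integral_indicator (P_meas hG j t)]
        congr 1
        ext x
        by_cases hx : lev G j x = lev G j t + 1
        · rw [indicator_of_mem (show x ∈ P G j t from ⟨hs.1, hx⟩),
            indicator_of_mem (show x ∈ {s | lev G j s = lev G j t + 1} from hx)]
        · rw [indicator_of_notMem (show x ∉ P G j t from fun h => hx h.2),
            indicator_of_notMem (show x ∉ {s | lev G j s = lev G j t + 1} from hx)]
          simp
  by_cases hqt : q = ∞
  · subst hqt
    simp only [eLpNorm_exponent_top] at *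
    simp only [one_div, ENNReal.inv_top, ENNReal.toReal_zero, mul_zero, ENNReal.rpow_zero, one_mul]
    apply eLpNormEssSup_le_of_ae_enorm_bound
    have h : ∀ᵐ t ∂(volume.restrict S), ∀ n, ‖Tn n t‖ₑ ≤ C * D := by
      rw [ae_all_iff]
      intro n
      filter_upwards [ae_le_eLpNormEssSup (f := Tn n) (μ := volume.restrict S)] with t ht
        using ht.trans (hTb n)
    filter_upwards [h] with t ht
    rcases hpt t with h2 | ⟨_, h2⟩
    · simp [h2]
    · rw [h2]; exact ht _
  · have hq0 : 0 < q.toReal := ENNReal.toReal_pos hq hqt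
    simp only [eLpNorm_eq_lintegral_rpow_enorm_toReal hq hqt] at hTb ⊢
    have hB' : ∀ n, ∫⁻ t, ‖Tn n t‖ₑ ^ q.toReal ∂(volume.restrict S) ≤ (C * D) ^ q.toReal := by
      intro n
      have := hTb n
      rwa [one_div, ENNReal.rpow_inv_le_iff hq0] at this
    rw [one_div, ENNReal.rpow_inv_le_iff hq0]
    calc _ ≤ ∫⁻ t, ∑ n ∈ Finset.range (2^j), ‖Tn n t‖ₑ ^ q.toReal ∂(volume.restrict S) := by
          apply lintegral_mono
          intro t
          rcases hpt t with h2 | ⟨h3, h2⟩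
          · simp [h2, hq0]
          · simp only [h2]
            exact Finset.single_le_sum (f := fun n => ‖Tn n t‖ₑ ^ q.toReal)
              (fun _ _ => zero_le) (Finset.mem_range.2 h3)
      _ = ∑ n ∈ Finset.range (2^j), ∫⁻ t, ‖Tn n t‖ₑ ^ q.toReal ∂(volume.restrict S) :=
          lintegral_finsetSum' _ fun n _ => (hTm n).enorm.pow_const _
      _ ≤ ∑ n ∈ Finset.range (2^j), (C * D) ^ q.toReal := Finset.sum_le_sum fun n _ => hB' n
      _ = _ := by
          rw [ENNReal.mul_rpow_of_nonneg (_ ^ _) _ hq0.le, ← ENNReal.rpow_mul]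
          simp only [Finset.sum_const, Finset.card_range, nsmul_eq_mul]
          congr 1
          rw [one_div, ENNReal.toReal_inv, mul_assoc, inv_mul_cancel₀ hq0.ne', mul_one]
          simp

lemma good {S : Set ℝ} (hSm : MeasurableSet S) {K : ℝ → ℝ → (X →L[ℝ] Y)}
    (hK : ContinuousOn (fun z : ℝ × ℝ => K z.1 z.2) (S ×ˢ S)) {f : ℝ → X}
    (hf : Integrable f (volume.restrict S)) {p q C : ℝ≥0∞} (hp : 1 ≤ p) (hpq : p < q)
    (hT : ∀ f : ℝ → X, Integrable f (volume.restrict S) →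
      eLpNorm (fun t => ∫ s in S, (K t s) (f s)) q (volume.restrict S) ≤
        C * eLpNorm f p (volume.restrict S))
    (hfp : eLpNorm f p (volume.restrict S) ≠ ∞)
    (hker : ∀ t ∈ S, Integrable (fun s => K t s (f s)) (volume.restrict S)) :
    eLpNorm (fun t => ∫ s in Ioi t, K t s (f s) ∂(volume.restrict S)) q (volume.restrict S)
      ≤ ((2 : ℝ≥0∞) ^ (-(2 * (1/p - 1/q).toReal)) * (2 * C) /
            (1 - (2 : ℝ≥0∞) ^ (-(1/p - 1/q).toReal))) *
          eLpNorm f p (volume.restrict S) := by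
  set μ := volume.restrict S with hμ
  have hp0 : p ≠ 0 := (zero_lt_one.trans_le hp).ne'
  have hpt : p ≠ ∞ := (hpq.trans_le le_top).ne
  have hpr : 0 < p.toReal := ENNReal.toReal_pos hp0 hpt
  have hq1 : 1 ≤ q := hp.trans hpq.le
  have hq0 : q ≠ 0 := (zero_lt_one.trans_le hq1).ne'
  set w : ℝ → ℝ≥0∞ := fun s => ‖f s‖ₑ ^ p.toReal with hw
  have hwm : AEMeasurable w μ := hf.1.enorm.pow_const _
  have hA : eLpNorm f p μ = (∫⁻ s, w s ∂μ) ^ (1 / p.toReal) :=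
    eLpNorm_eq_lintegral_rpow_enorm_toReal hp0 hpt
  have hwt : ∫⁻ s, w s ∂μ ≠ ∞ := by
    intro h
    rw [h, ENNReal.top_rpow_of_pos (by positivity)] at hA
    exact hfp hA
  set ν := μ.withDensity w with hν
  have : IsFiniteMeasure ν := isFiniteMeasure_withDensity hwt
  have : NullSingletonClass ν := ⟨fun x => withDensity_absolutelyContinuous μ w (measure_singleton x)⟩
  have hνu : ν univ = ∫⁻ s, w s ∂μ := by rw [hν, withDensity_apply _ MeasurableSet.univ]; simp
  set A := ν.real univ with hAdef
  have hA0 : 0 ≤ A := measureReal_nonneg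
  set G : ℝ → ℝ := fun s => ν.real (Iic s) / A with hGdef
  have hG : Monotone G := fun s t hst => by
    have : ν.real (Iic s) ≤ ν.real (Iic t) := measureReal_mono (Iic_subset_Iic.2 hst)
    simp only [hGdef]
    gcongr
  have h0 : ∀ s, 0 ≤ G s := fun s => div_nonneg measureReal_nonneg hA0
  have hle : ∀ s, ν.real (Iic s) ≤ A := fun s => measureReal_mono (subset_univ _)
  have h1 : ∀ s, G s ≤ 1 := fun s => div_le_one_of_le₀ (hle s) hA0
  have hFG : ∀ s, ν.real (Iic s) = A * G s := by
    intro s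
    rcases hA0.eq_or_lt with h | h
    · have := hle s
      have h3 : 0 ≤ ν.real (Iic s) := measureReal_nonneg
      rw [← h] at this ⊢
      linarith
    · simp only [hGdef]; field_simp
  have hzf : ∀ c, ∀ᵐ s ∂μ, G s = c → f s = 0 := by
    intro c
    have hm : MeasurableSet {s | G s = c} := hG.measurable (measurableSet_singleton c)
    have h2 : ν {s | G s = c} ≤ ENNReal.ofReal 0 := by
      apply mass_le ν _ hm
      intro u hu v hv _
      rw [hFG, hFG, show G u = c from hu, show G v = c from hv]; simp
    simp only [ENNReal.ofReal_zero, nonpos_iff_eq_zero] at h2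
    rw [hν, withDensity_apply_eq_zero' hwm] at h2
    rw [ae_iff]
    refine measure_mono_null ?_ h2
    intro s hs
    simp only [mem_ofPred_eq, Classical.not_imp] at hs
    refine ⟨?_, hs.1⟩
    simp [hw, hs.2, hpr]
  have hcell : ∀ j n, eLpNorm ({s | lev G j s = n}.indicator f) p μ
      ≤ (2:ℝ≥0∞) ^ (-(j * (1/p).toReal)) * eLpNorm f p μ := by
    intro j n
    have hm : MeasurableSet {s | lev G j s = n} := lev_meas hG j (measurableSet_singleton n)
    have h2 : ν {s | lev G j s = n} ≤ ENNReal.ofReal ((1/2)^j * A) := by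
      apply mass_le ν _ hm
      intro u hu v hv _
      have : lev G j v = lev G j u := (show lev G j v = n from hv).trans (show lev G j u = n from hu).symm
      have := lev_diff h0 j this
      rw [hFG, hFG]
      nlinarith
    rw [eLpNorm_indicator_eq_eLpNorm_restrict hm, eLpNorm_eq_lintegral_rpow_enorm_toReal hp0 hpt,
      ← withDensity_apply _ hm, hA, ← hνu]
    calc _ ≤ (ENNReal.ofReal ((1/2)^j * A)) ^ (1/p.toReal) := by gcongr
      _ = _ := by
        rw [ENNReal.ofReal_mul (by positivity), ENNReal.mul_rpow_of_nonneg _ _ (by positivity)]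
        congr 1
        · rw [ENNReal.ofReal_pow (by norm_num), one_div, ENNReal.ofReal_inv_of_pos (by norm_num),
            one_div, one_div, ENNReal.toReal_inv, ← neg_mul, ENNReal.rpow_mul, ENNReal.rpow_neg,
            ENNReal.rpow_natCast, ENNReal.inv_pow]
          simp
        · simp [hAdef]
  have hδ : (1/p - 1/q).toReal = (1/p).toReal - (1/q).toReal := by
    apply ENNReal.toReal_sub_of_le
    · simpa using hpq.le
    · simpa using hp0
  have hδ1 : (1/p).toReal ≤ 1 := by
    have : (1/p) ≤ 1 := by simpa using hp
    simpa using ENNReal.toReal_mono ENNReal.one_ne_top this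
  have hq0' : 0 ≤ (1/q).toReal := ENNReal.toReal_nonneg
  set δ := (1/p - 1/q).toReal with hδd
  set r : ℝ≥0∞ := (2:ℝ≥0∞) ^ (-δ) with hr
  have hlev : ∀ j : ℕ, eLpNorm (fun t => ∫ s in P G j t, K t s (f s) ∂μ) q μ
      ≤ r ^ j * (C * eLpNorm f p μ) := by
    intro j
    refine (level hSm hK hf hq0 hT hG h1 j (hcell j)).trans (le_of_eq ?_)
    have : r ^ j = (2:ℝ≥0∞) ^ (j * (1/q).toReal) * (2:ℝ≥0∞) ^ (-(j * (1/p).toReal)) := by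
      rw [← ENNReal.rpow_add _ _ (by simp) (by simp), hr, ← ENNReal.rpow_mul_natCast, hδ]
      congr 1; ring
    rw [this]; ring
  have hmeas : ∀ j : ℕ, AEStronglyMeasurable (fun t => ∫ s in P G j t, K t s (f s) ∂μ) μ := by
    intro j
    have hl := lev_meas hG j
    refine ker_meas hSm hK hf.1 {z | Even (lev G j z.1) ∧ lev G j z.2 = lev G j z.1 + 1} ?_
    refine MeasurableSet.inter ?_ ?_
    · exact (hl.comp measurable_fst) (MeasurableSet.of_discrete (s := {n | Even n}))
    · exact measurableSet_eq_fun (hl.comp measurable_snd) ((hl.comp measurable_fst).add_const 1)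
  have hsum : ∀ N : ℕ, eLpNorm (fun t => ∑ j ∈ Finset.range N, ∫ s in P G (j+1) t, K t s (f s) ∂μ) q μ
      ≤ (r * (1 - r)⁻¹) * (C * eLpNorm f p μ) := by
    intro N
    have e : (fun t => ∑ j ∈ Finset.range N, ∫ s in P G (j+1) t, K t s (f s) ∂μ)
      = ∑ j ∈ Finset.range N, fun t => ∫ s in P G (j+1) t, K t s (f s) ∂μ := by ext t; simp
    rw [e]
    calc _ ≤ ∑ j ∈ Finset.range N, eLpNorm (fun t => ∫ s in P G (j+1) t, K t s (f s) ∂μ) q μ :=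
          eLpNorm_sum_le (fun j _ => hmeas _) hq1
      _ ≤ ∑ j ∈ Finset.range N, r * r ^ j * (C * eLpNorm f p μ) := by
          apply Finset.sum_le_sum; intro j _
          rw [← pow_succ']; exact hlev _
      _ = r * (∑ j ∈ Finset.range N, r ^ j) * (C * eLpNorm f p μ) := by
          rw [Finset.mul_sum, Finset.sum_mul]
      _ ≤ _ := by
          gcongr
          rw [← ENNReal.tsum_geometric]
          exact ENNReal.sum_le_tsum _
  have hconst : (r * (1 - r)⁻¹) * (C * eLpNorm f p μ) ≤
      ((2 : ℝ≥0∞) ^ (-(2 * δ)) * (2 * C) / (1 - r)) * eLpNorm f p μ := by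
    have h2r : 1 ≤ 2 * r := by
      rw [hr]
      nth_rewrite 1 [← ENNReal.rpow_one 2]
      rw [← ENNReal.rpow_add _ _ (by simp) (by simp)]
      calc (1:ℝ≥0∞) = 2 ^ (0:ℝ) := by simp
        _ ≤ _ := ENNReal.rpow_le_rpow_of_exponent_le (by norm_num) (by linarith)
    have hrr : (2 : ℝ≥0∞) ^ (-(2 * δ)) = r * r := by
      rw [hr, ← ENNReal.rpow_add _ _ (by simp) (by simp)]; congr 1; ring
    rw [hrr, div_eq_mul_inv]
    calc _ = 1 * ((r * (1 - r)⁻¹) * (C * eLpNorm f p μ)) := by ring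
      _ ≤ (2 * r) * ((r * (1 - r)⁻¹) * (C * eLpNorm f p μ)) := by gcongr
      _ = _ := by ring
  refine fatou hq0 _ _ (fun N => ?_) ?_ (fun N => (hsum N).trans hconst)
  · have := Finset.aestronglyMeasurable_fun_sum (Finset.range N) (fun j _ => hmeas (j+1))
    exact this
  · filter_upwards [ae_restrict_mem hSm] with t ht
    right
    apply tendsto_P (hker t ht) hG h0 h1
    intro c
    filter_upwards [hzf c] with s hs hc
    rw [hs hc, map_zero]

lemma main {S : Set ℝ} (hSo : IsOpen S) {K : ℝ → ℝ → (X →L[ℝ] Y)}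
    (hK : ContinuousOn (fun z : ℝ × ℝ => K z.1 z.2) (S ×ˢ S)) {f : ℝ → X}
    (hf : Integrable f (volume.restrict S)) (hfm : StronglyMeasurable f)
    {p q C : ℝ≥0∞} (hp : 1 ≤ p) (hpq : p < q)
    (hT : ∀ f : ℝ → X, Integrable f (volume.restrict S) →
      eLpNorm (fun t => ∫ s in S, (K t s) (f s)) q (volume.restrict S) ≤
        C * eLpNorm f p (volume.restrict S)) :
    eLpNorm (fun t => ∫ s in Ioi t, K t s (f s) ∂(volume.restrict S)) q (volume.restrict S)
      ≤ ((2 : ℝ≥0∞) ^ (-(2 * (1/p - 1/q).toReal)) * (2 * C) /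
            (1 - (2 : ℝ≥0∞) ^ (-(1/p - 1/q).toReal))) *
          eLpNorm f p (volume.restrict S) := by
  have hSm := hSo.measurableSet
  have : LocallyCompactSpace S := hSo.locallyCompactSpace
  set Q : ℕ → Set ℝ := fun n => Subtype.val '' compactCovering S n with hQ
  have hQc : ∀ n, IsCompact (Q n) := fun n =>
    (isCompact_compactCovering S n).image continuous_subtype_val
  have hQS : ∀ n, Q n ⊆ S := by rintro n _ ⟨x, _, rfl⟩; exact x.2
  have hQm : Monotone Q := fun m n h => image_mono (compactCovering_subset S h)
  have hQe : ∀ s ∈ S, ∃ n, s ∈ Q n := by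
    intro s hs
    obtain ⟨n, hn⟩ := exists_mem_compactCovering (⟨s, hs⟩ : S)
    exact ⟨n, ⟨s, hs⟩, hn, rfl⟩
  set B : ℕ → Set ℝ := fun n => Q n ∩ {s | ‖f s‖ ≤ n} with hB
  have hBm : ∀ n, MeasurableSet (B n) := fun n =>
    (hQc n).measurableSet.inter (measurableSet_le hfm.norm.measurable measurable_const)
  have hfi : ∀ n, Integrable ((B n).indicator f) (volume.restrict S) := fun n =>
    hf.indicator (hBm n)
  have hle : ∀ n, eLpNorm ((B n).indicator f) p (volume.restrict S) ≤
    eLpNorm f p (volume.restrict S) := fun n => eLpNorm_indicator_le f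
  have hq0 : q ≠ 0 := (zero_lt_one.trans_le (hp.trans hpq.le)).ne'
  have hfin : ∀ n, eLpNorm ((B n).indicator f) p (volume.restrict S) ≠ ∞ := by
    intro n
    rw [eLpNorm_indicator_eq_eLpNorm_restrict (hBm n)]
    have hfinm : IsFiniteMeasure ((volume.restrict S).restrict (B n)) := by
      refine ⟨?_⟩
      rw [Measure.restrict_apply_univ]
      refine (Measure.restrict_apply_le _ _).trans_lt ?_
      exact (measure_mono inter_subset_left).trans_lt (hQc n).measure_lt_top
    refine (MemLp.of_bound hfm.aestronglyMeasurable n ?_).2.ne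
    filter_upwards [ae_restrict_mem (hBm n)] with s hs using hs.2
  refine fatou hq0 (fun n t => ∫ s in Ioi t, K t s ((B n).indicator f s) ∂(volume.restrict S)) _
    (fun n => ?_) ?_ (fun n => ?_)
  · exact ker_meas hSm hK (hfi n).1 {z | z.1 < z.2} (measurableSet_lt measurable_fst measurable_snd)
  · refine Eventually.of_forall fun t => ?_
    by_cases hI : IntegrableOn (fun s => K t s (f s)) (Ioi t) (volume.restrict S)
    · right
      have e : ∀ n s, K t s ((B n).indicator f s) = (B n).indicator (fun s => K t s (f s)) s := by
        intro n s
        by_cases hs : s ∈ B n <;> simp [hs]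
      simp_rw [e]
      refine tendsto_integral_of_dominated_convergence (fun s => ‖K t s (f s)‖)
        (fun n => hI.1.indicator (hBm n)) hI.norm
        (fun n => Eventually.of_forall fun s => norm_indicator_le_norm_self _ _) ?_
      filter_upwards [ae_restrict_of_ae (ae_restrict_mem hSm)] with s hs
      obtain ⟨n, hn⟩ := hQe s hs
      obtain ⟨m, hm⟩ := exists_nat_ge ‖f s‖
      apply tendsto_const_nhds.congr'
      filter_upwards [eventually_ge_atTop (max n m)] with k hk
      rw [indicator_of_mem]
      refine ⟨hQm ((le_max_left _ _).trans hk) hn, hm.trans ?_⟩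
      exact_mod_cast (le_max_right _ _).trans hk
    · left
      exact integral_undef hI
  · refine (good hSm hK (hfi n) hp hpq hT (hfin n) fun t ht => ?_).trans (by gcongr; exact hle n)
    exact ker_int hSm hK (hfi n) (hQc n) (hQS n)
      (fun s hs => indicator_of_notMem (fun h => hs h.1) _) ht

end ker
end CK

/-- **Christ–Kiselev Lemma.** Let `X`, `Y` be Banach spaces, `-∞ ≤ a < b ≤ ∞`
(encoded as extended reals, with `S = (a,b)` the corresponding interval of reals),
and let `K(t,s)` be a continuous `B(X,Y)`-valued kernel on the interval.
If `Tf(t) = ∫_a^b K(t,s) f(s) ds` satisfies `‖Tf‖_{L^q;Y} ≤ C ‖f‖_{L^p;X}`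
for all Bochner-integrable `f`, and `1 ≤ p < q ≤ ∞`, then the operator
`Wf(t) = ∫_t^b K(t,s) f(s) ds` satisfies
`‖Wf‖_{L^q;Y} ≤ (2^{-2(1/p-1/q)} · 2C)/(1 - 2^{-(1/p-1/q)}) ‖f‖_{L^p;X}`. -/
theorem christ_kiselev
    {X Y : Type*} [NormedAddCommGroup X] [NormedSpace ℝ X] [CompleteSpace X]
    [NormedAddCommGroup Y] [NormedSpace ℝ Y] [CompleteSpace Y]
    (a b : EReal) (hab : a < b)
    (S : Set ℝ) (hS : S = {t : ℝ | a < (t : EReal) ∧ (t : EReal) < b})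
    (K : ℝ → ℝ → (X →L[ℝ] Y))
    (hK : ContinuousOn (fun z : ℝ × ℝ => K z.1 z.2) (S ×ˢ S))
    (p q : ℝ≥0∞) (hp : 1 ≤ p) (hpq : p < q)
    (C : ℝ≥0∞)
    (hT : ∀ f : ℝ → X, Integrable f (volume.restrict S) →
      eLpNorm (fun t => ∫ s in S, (K t s) (f s)) q (volume.restrict S) ≤
        C * eLpNorm f p (volume.restrict S)) :
    ∀ f : ℝ → X, Integrable f (volume.restrict S) →
      eLpNorm (fun t => ∫ s in S ∩ Set.Ioi t, (K t s) (f s)) q (volume.restrict S) ≤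
        ((2 : ℝ≥0∞) ^ (-(2 * (1/p - 1/q).toReal)) * (2 * C) /
            (1 - (2 : ℝ≥0∞) ^ (-(1/p - 1/q).toReal))) *
          eLpNorm f p (volume.restrict S) := by
  intro f hf
  have hSo : IsOpen S := by
    rw [hS]
    exact (isOpen_lt continuous_const continuous_coe_real_ereal).inter
      (isOpen_lt continuous_coe_real_ereal continuous_const)
  have hae := hf.1.ae_eq_mk
  have h := CK.main hSo hK (hf.congr hae) hf.1.stronglyMeasurable_mk hp hpq hT
  rw [eLpNorm_congr_ae hae]
  convert h using 2
  funext t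
  rw [Set.inter_comm, ← Measure.restrict_restrict measurableSet_Ioi]
  apply integral_congr_ae
  filter_upwards [ae_restrict_of_ae hae] with s hs
  rw [hs]
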